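/- Let G be a branch group acting on a rooted tree T and let H be a subgroup of finite index in G. Then H has no non-trivial virtually soluble normal subgroup. -/

import Mathlib

/-!  Common definitions: rooted trees of type `(m n)`, tree automorphisms,
rigid stabilizers, branch groups, and auxiliary notions. -/

universe u

/-- Vertices of the rooted tree of type `m`: finite sequences `(x_0, …, x_{n-1})`
with `x_i ∈ {1, …, m i}` (encoded as `Fin (m i)`). -/
def Vertex (m : ℕ → ℕ) : Type := Σ n : ℕ, ∀ i : Fin n, Fin (m i)

namespace Vertex

variable {m : ℕ → ℕ}

/-- The level of a vertex: its length. -/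
def level (v : Vertex m) : ℕ := v.1

/-- `v` is a (weak) prefix of `w`; i.e. `w` lies in the subtree `T_v`
(`w = v` or `w` is a descendant of `v`). -/
def IsPrefix (v w : Vertex m) : Prop :=
  ∃ h : v.1 ≤ w.1, ∀ i : Fin v.1, w.2 (Fin.castLE h i) = v.2 i

/-- `w` is a child (one-step extension) of `v`. -/
def IsChild (v w : Vertex m) : Prop := w.1 = v.1 + 1 ∧ IsPrefix v w

end Vertex

/-- The `n`-th layer `L_n` of the tree: all vertices of level `n`. -/
def layer (m : ℕ → ℕ) (n : ℕ) : Set (Vertex m) := {v | v.1 = n}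

section Rist

variable {m : ℕ → ℕ} (G : Type*) [Group G] [MulAction G (Vertex m)]

/-- The rigid stabilizer of a vertex `v`: all elements fixing every vertex
outside the subtree `T_v`. -/
def rist (v : Vertex m) : Subgroup G :=
  ⨅ w ∈ {w : Vertex m | ¬ Vertex.IsPrefix v w}, MulAction.stabilizer G w

/-- The subgroup generated by the rigid stabilizers of the vertices in `X`. -/
def ristSet (X : Set (Vertex m)) : Subgroup G := ⨆ v ∈ X, rist G v

/-- `rist_G(n)`, the rigid stabilizer of the `n`-th layer. -/
def ristLayer (m : ℕ → ℕ) (G : Type*) [Group G] [MulAction G (Vertex m)] (n : ℕ) :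
    Subgroup G :=
  ristSet G (layer m n)

/-- The orbit of the vertex `v` under a subgroup `H ≤ G`. -/
def subOrbit (H : Subgroup G) (v : Vertex m) : Set (Vertex m) :=
  {w | ∃ h ∈ H, h • v = w}

/-- The set of orbits of a subgroup `H ≤ G` on a set `X` of vertices. -/
def orbitsOn (H : Subgroup G) (X : Set (Vertex m)) : Set (Set (Vertex m)) :=
  (fun v => subOrbit G H v) '' X

end Rist

/-- `G` is a branch group on the rooted tree of type `m` (with respect to the given
action): the action is faithful and by tree automorphisms, `G` acts transitively on
each layer, and each `rist_G(n)` has finite index in `G`. -/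
structure IsBranchGroup (m : ℕ → ℕ) (G : Type*) [Group G] [MulAction G (Vertex m)] :
    Prop where
  faithful : ∀ g : G, (∀ v : Vertex m, g • v = v) → g = 1
  aut : ∀ (g : G) (v w : Vertex m), Vertex.IsChild v w ↔ Vertex.IsChild (g • v) (g • w)
  trans : ∀ v w : Vertex m, v.1 = w.1 → ∃ g : G, g • v = w
  ristFiniteIndex : ∀ n : ℕ, (ristLayer m G n).FiniteIndex

/-- A group is virtually soluble if it has a soluble subgroup of finite index. -/
def VirtuallySolvable (Γ : Type*) [Group Γ] : Prop :=
  ∃ S : Subgroup Γ, S.FiniteIndex ∧ IsSolvable ↥S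

/-- A group is virtually abelian if it has an abelian subgroup of finite index. -/
def VirtuallyAbelian (Γ : Type*) [Group Γ] : Prop :=
  ∃ S : Subgroup Γ, S.FiniteIndex ∧ ∀ a ∈ S, ∀ b ∈ S, a * b = b * a

/-- For subgroups `A ≤ B` of a group with `A` normalised by `B`, this says that the
factor `B/A` belongs to the class `𝔛`. -/
def FactorIn (𝔛 : (Γ : Type u) → [inst : Group Γ] → Prop) {G : Type u} [Group G]
    (A B : Subgroup G) : Prop :=
  ∃ hn : (A.subgroupOf B).Normal, letI := hn; 𝔛 (↥B ⧸ A.subgroupOf B)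

/-- The factor `B/A` is virtually soluble. -/
def FactorVirtuallySolvable {G : Type*} [Group G] (A B : Subgroup G) : Prop :=
  ∃ hn : (A.subgroupOf B).Normal,
    letI := hn; VirtuallySolvable (↥B ⧸ A.subgroupOf B)

/-- The factor `B/A` is virtually abelian. -/
def FactorVirtuallyAbelian {G : Type*} [Group G] (A B : Subgroup G) : Prop :=
  ∃ hn : (A.subgroupOf B).Normal,
    letI := hn; VirtuallyAbelian (↥B ⧸ A.subgroupOf B)

/-- `Γ` has `r` infinite normal subgroups that generate their direct product in `Γ`:
each of them intersects trivially the subgroup generated by the others. -/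
def HasIndepFamily (Γ : Type*) [Group Γ] (r : ℕ) : Prop :=
  ∃ N : Fin r → Subgroup Γ, (∀ i, (N i).Normal) ∧ (∀ i, Infinite ↥(N i)) ∧
    ∀ i, N i ⊓ (⨆ j ∈ ({i}ᶜ : Set (Fin r)), N j) = ⊥

/-!
Call `P ≤ G` micro-supported at `v` if it meets the rigid stabilizer of every vertex of `T_v`
non-trivially; a branch group is micro-supported at every vertex. If `P` is micro-supported at `v`
and `1 ≠ k ∈ P ∩ rist_G(v)` moves `x`, then `P ∩ rist_G(x)` is properly contained in
`P ∩ rist_G(v)`, because `k` is missing, and is not centralized by `k`, because `k` conjugates it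
into `rist_G(kx)`. Hence `P ∩ rist_G(v)` is infinite and not abelian. So being micro-supported at
`v` passes to subgroups of finite index and to commutator subgroups, and excludes virtual
solubility.

If `K ≠ 1` has a normalizer `N` of finite index and `k ∈ K` moves `v`, then `k a k⁻¹` commutes with
`b` for all `a, b ∈ N ∩ rist_G(v)`, so that `[a, b] = [[a, k], b] ∈ K`. As `N` is micro-supported at
`v`, so is `K`.
-/

open Subgroup MulAction
open scoped commutatorElement

theorem commutatorElement_commutatorElement_left_eq {G : Type*} [Group G] {a b k : G}
    (h : Commute (k * a * k⁻¹) b) : ⁅⁅a, k⁆, b⁆ = ⁅a, b⁆ := by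
  have hak : ⁅a, k⁆ = a * (k * a * k⁻¹)⁻¹ := by group
  rw [hak, commutatorElement_mul_left_eq_conj_mul, h.inv_left.commutator_eq]
  simp

theorem exists_smul_ne_of_ne_one {G X : Type*} [Group G] [MulAction G X] [FaithfulSMul G X] {g : G}
    (hg : g ≠ 1) : ∃ x : X, g • x ≠ x := by
  contrapose! hg
  exact FaithfulSMul.eq_of_smul_eq_smul fun x : X => by rw [hg, one_smul]

namespace Vertex

variable {m : ℕ → ℕ} {u v w : Vertex m}

theorem IsPrefix.refl (v : Vertex m) : v.IsPrefix v := ⟨le_rfl, fun _ => rfl⟩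

theorem IsPrefix.trans : u.IsPrefix v → v.IsPrefix w → u.IsPrefix w :=
  fun ⟨huv, hu⟩ ⟨hvw, hv⟩ => ⟨huv.trans hvw, fun i => (hv (Fin.castLE huv i)).trans (hu i)⟩

theorem IsPrefix.eq_of_level_eq (hu : u.IsPrefix w) (hv : v.IsPrefix w)
    (h : u.level = v.level) : u = v := by
  obtain ⟨n, u⟩ := u
  obtain ⟨_, v⟩ := v
  obtain rfl : n = _ := h
  exact congrArg (Sigma.mk n) (funext fun i => (hu.2 i).symm.trans (hv.2 i))

theorem IsPrefix.eq_or_exists_isChild (h : v.IsPrefix w) :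
    v = w ∨ ∃ u, v.IsPrefix u ∧ u.IsChild w := by
  rcases h.1.eq_or_lt with heq | hlt
  · exact .inl (h.eq_of_level_eq (.refl w) heq)
  · have hw : w.1 - 1 ≤ w.1 := Nat.sub_le ..
    exact .inr ⟨⟨w.1 - 1, fun i => w.2 (Fin.castLE hw i)⟩,
      ⟨Nat.le_sub_one_of_lt hlt, h.2⟩, (Nat.sub_add_cancel (by lia)).symm, hw, fun _ => rfl⟩

theorem exists_isChild_of_level_ne_zero (h : v.level ≠ 0) : ∃ u : Vertex m, u.IsChild v := by
  have hroot : IsPrefix ⟨0, fun i => i.elim0⟩ v := ⟨Nat.zero_le _, fun i => i.elim0⟩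
  rcases hroot.eq_or_exists_isChild with rfl | ⟨u, -, hu⟩
  · exact absurd rfl h
  · exact ⟨u, hu⟩

/-- The subtree `T_v`: the vertex `v` together with its descendants. -/
def subtree (v : Vertex m) : Set (Vertex m) := {w | v.IsPrefix w}

theorem disjoint_subtree (h : u.level = v.level) (huv : u ≠ v) : Disjoint u.subtree v.subtree :=
  Set.disjoint_left.2 fun _ hu hv => huv (hu.eq_of_level_eq hv h)

end Vertex

open Vertex

/-- The action of `G` on the rooted tree of type `m` is by tree automorphisms. Preservation of the
child relation in one direction suffices, since it is required for inverses as well. -/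
class IsTreeAction (m : ℕ → ℕ) (G : Type*) [Group G] [MulAction G (Vertex m)] : Prop where
  isChild_smul : ∀ (g : G) {v w : Vertex m}, v.IsChild w → (g • v).IsChild (g • w)

section TreeAction

variable {m : ℕ → ℕ} {G : Type*} [Group G] [MulAction G (Vertex m)] {u v w : Vertex m}

section Levels

variable [IsTreeAction m G]

theorem Vertex.IsPrefix.smul {v w : Vertex m} (g : G) (h : v.IsPrefix w) :
    (g • v).IsPrefix (g • w) := by
  rcases h.eq_or_exists_isChild with rfl | ⟨u, hvu, huw⟩
  · exact .refl _
  · exact (hvu.smul g).trans (IsTreeAction.isChild_smul g huw).2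
termination_by w.1
decreasing_by exact Nat.lt_of_succ_le huw.1.ge

theorem Vertex.level_le_level_smul (g : G) (v : Vertex m) : v.level ≤ (g • v).level := by
  by_cases hv : v.level = 0
  · exact hv ▸ Nat.zero_le _
  · obtain ⟨u, huv⟩ := exists_isChild_of_level_ne_zero hv
    have hlevel : v.level = u.level + 1 := huv.1
    have hlevel_smul : (g • v).level = (g • u).level + 1 := (IsTreeAction.isChild_smul g huv).1
    rw [hlevel, hlevel_smul]
    exact Nat.succ_le_succ (level_le_level_smul g u)
termination_by v.level
decreasing_by exact Nat.lt_of_succ_le hlevel.ge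

theorem Vertex.level_smul (g : G) (v : Vertex m) : (g • v).level = v.level :=
  le_antisymm (by simpa using level_le_level_smul g⁻¹ (g • v)) (level_le_level_smul g v)

theorem Vertex.disjoint_subtree_smul {g : G} (h : g • v ≠ v) :
    Disjoint (g • v).subtree v.subtree :=
  disjoint_subtree (level_smul g v) h

end Levels

section Rist

theorem mem_rist_iff {g : G} : g ∈ rist G v ↔ ∀ w, w ∉ v.subtree → g • w = w := by
  simp [rist, subtree, Subgroup.mem_iInf]

theorem rist_anti (h : v.IsPrefix w) : rist G w ≤ rist G v := fun _ hg =>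
  mem_rist_iff.2 fun x hx => mem_rist_iff.1 hg x fun hwx => hx (h.trans hwx)

theorem conj_mem_rist_smul [IsTreeAction m G] {a : G} (ha : a ∈ rist G v) (k : G) :
    k * a * k⁻¹ ∈ rist G (k • v) := by
  refine mem_rist_iff.2 fun w hw => ?_
  have hkw : k⁻¹ • w ∉ v.subtree := fun h => hw (by simpa [subtree] using IsPrefix.smul k h)
  rw [mul_smul, mul_smul, mem_rist_iff.1 ha _ hkw, smul_inv_smul]

theorem smul_eq_of_mem_rist [IsTreeAction m G] {g : G} (hg : g ∈ rist G v) : g • v = v := by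
  by_contra hgv
  have hv : g • v ∉ v.subtree := (disjoint_subtree_smul hgv).notMem_of_mem_left (.refl _)
  exact hgv (smul_left_cancel g (mem_rist_iff.1 hg _ hv))

variable [FaithfulSMul G (Vertex m)]

theorem exists_smul_ne_of_mem_rist {g : G} (hg : g ∈ rist G v) (hg1 : g ≠ 1) :
    ∃ x ∈ v.subtree, g • x ≠ x := by
  obtain ⟨x, hx⟩ := exists_smul_ne_of_ne_one (X := Vertex m) hg1
  exact ⟨x, not_imp_comm.1 (mem_rist_iff.1 hg x) hx, hx⟩

theorem disjoint_rist (h : Disjoint u.subtree v.subtree) : Disjoint (rist G u) (rist G v) := by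
  refine disjoint_def.2 fun {g} hgu hgv => by_contra fun hg1 => ?_
  obtain ⟨x, hxu, hx⟩ := exists_smul_ne_of_mem_rist hgu hg1
  exact hx (mem_rist_iff.1 hgv x (h.notMem_of_mem_left hxu))

theorem commute_of_mem_rist (h : Disjoint u.subtree v.subtree) {a b : G}
    (ha : a ∈ rist G u) (hb : b ∈ rist G v) : Commute a b := by
  have hdisj : (toPermHom G (Vertex m) a).Disjoint (toPermHom G (Vertex m) b) := fun x =>
    (em (x ∈ u.subtree)).symm.imp (mem_rist_iff.1 ha x)
      fun hx => mem_rist_iff.1 hb x (h.notMem_of_mem_left hx)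
  exact .of_map toPerm_injective hdisj.commute

theorem commutator_inf_rist_le [IsTreeAction m G] {H K : Subgroup G}
    (hHK : H ≤ normalizer (K : Set G)) {k : G} (hk : k ∈ K) (hkv : k • v ≠ v) :
    ⁅H ⊓ rist G v, H ⊓ rist G v⁆ ≤ K := by
  refine commutator_le.2 fun a ⟨haH, ha⟩ b ⟨hbH, hb⟩ => ?_
  have hcomm : Commute (k * a * k⁻¹) b :=
    commute_of_mem_rist (disjoint_subtree_smul hkv) (conj_mem_rist_smul ha k) hb
  rw [← commutatorElement_commutatorElement_left_eq hcomm]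
  have hak : ⁅a, k⁆ ∈ K :=
    le_normalizer_iff_commutator_le_right.1 hHK (commutator_mem_commutator haH hk)
  exact le_normalizer_iff_commutator_le_left.1 hHK (commutator_mem_commutator hak hbH)

end Rist

/-- `P` is micro-supported at `v`: it meets the rigid stabilizer of every vertex of the subtree
`T_v` non-trivially. -/
def MicroSupported (P : Subgroup G) (v : Vertex m) : Prop :=
  ∀ u ∈ v.subtree, P ⊓ rist G u ≠ ⊥

namespace MicroSupported

variable {P Q : Subgroup G}

theorem of_isPrefix (hP : MicroSupported P v) (h : v.IsPrefix u) : MicroSupported P u :=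
  fun _ hw => hP _ (h.trans hw)

theorem exists_mem_inf_rist (hP : MicroSupported P v) : ∃ g ∈ P ⊓ rist G v, g ≠ 1 :=
  (bot_or_exists_ne_one _).resolve_left (hP v (.refl v))

variable [FaithfulSMul G (Vertex m)] [IsTreeAction m G]

theorem exists_inf_rist_lt (hP : MicroSupported P v) :
    ∃ x ∈ v.subtree, P ⊓ rist G x < P ⊓ rist G v := by
  obtain ⟨k, hk, hk1⟩ := hP.exists_mem_inf_rist
  obtain ⟨x, hvx, hkx⟩ := exists_smul_ne_of_mem_rist hk.2 hk1
  exact ⟨x, hvx, SetLike.lt_iff_le_and_exists.2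
    ⟨inf_le_inf_left P (rist_anti hvx), k, hk, fun hk' => hkx (smul_eq_of_mem_rist hk'.2)⟩⟩

theorem infinite (hP : MicroSupported P v) : Infinite ↥(P ⊓ rist G v) := by
  by_contra hfin
  rw [not_infinite_iff_finite] at hfin
  induction hn : Nat.card ↥(P ⊓ rist G v) using Nat.strong_induction_on generalizing v with
  | _ n ih =>
    obtain ⟨x, hvx, hlt⟩ := hP.exists_inf_rist_lt
    exact ih _ (hn ▸ Set.ncard_lt_ncard hlt) (hP.of_isPrefix hvx)
      (Finite.of_injective _ (inclusion_injective hlt.le)) rfl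

theorem of_isFiniteRelIndex (hP : MicroSupported P v) [Q.IsFiniteRelIndex P] :
    MicroSupported Q v := by
  intro u hu hbot
  have hinf : Infinite ↥(P ⊓ rist G u) := (hP.of_isPrefix hu).infinite
  have hinter : Q ⊓ (P ⊓ rist G u) = ⊥ := eq_bot_mono (inf_le_inf_left Q inf_le_right) hbot
  have hcard : Q.relIndex (P ⊓ rist G u) = Nat.card ↥(P ⊓ rist G u) := by
    rw [← inf_relIndex_right, hinter, relIndex_bot_left]
  rw [Nat.card_eq_zero_of_infinite] at hcard
  exact relIndex_ne_zero (relIndex_eq_zero_of_le_right inf_le_left hcard)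

theorem commutator_inf_rist_ne_bot (hP : MicroSupported P v) :
    ⁅P ⊓ rist G v, P ⊓ rist G v⁆ ≠ ⊥ := by
  obtain ⟨k, hk, hk1⟩ := hP.exists_mem_inf_rist
  obtain ⟨x, hvx, hkx⟩ := exists_smul_ne_of_mem_rist hk.2 hk1
  obtain ⟨a, ha, ha1⟩ := (hP.of_isPrefix hvx).exists_mem_inf_rist
  intro hbot
  have hka : ⁅k, a⁆ = 1 := by
    rw [← mem_bot, ← hbot]
    exact commutator_mem_commutator hk ⟨ha.1, rist_anti hvx ha.2⟩
  have haka : a ∈ rist G (k • x) := by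
    have hconj : k * a * k⁻¹ = a := (commutatorElement_eq_one_iff_commute.1 hka).mul_inv_cancel
    exact hconj ▸ conj_mem_rist_smul ha.2 k
  exact ha1 (disjoint_def.1 (disjoint_rist (disjoint_subtree_smul hkx)) haka ha.2)

theorem of_commutator_inf_rist_le (hP : MicroSupported P v)
    (hQ : ⁅P ⊓ rist G v, P ⊓ rist G v⁆ ≤ Q) : MicroSupported Q v := by
  intro u hu
  have hPQ : ⁅P ⊓ rist G u, P ⊓ rist G u⁆ ≤ Q :=
    have hle := inf_le_inf_left P (rist_anti hu)
    (commutator_mono hle hle).trans hQ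
  have hrist : ⁅P ⊓ rist G u, P ⊓ rist G u⁆ ≤ rist G u :=
    (commutator_le_self _).trans inf_le_right
  exact ne_bot_of_le_ne_bot (hP.of_isPrefix hu).commutator_inf_rist_ne_bot (le_inf hPQ hrist)

theorem commutator (hP : MicroSupported P v) : MicroSupported ⁅P, P⁆ v :=
  hP.of_commutator_inf_rist_le (commutator_mono inf_le_left inf_le_left)

theorem map_derivedSeries (hP : MicroSupported P v) (n : ℕ) :
    MicroSupported ((derivedSeries P n).map P.subtype) v := by
  induction n with
  | zero => simpa [derivedSeries_zero, ← MonoidHom.range_eq_map] using hP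
  | succ n ih =>
    rw [derivedSeries_succ, map_commutator]
    exact ih.commutator

theorem not_isSolvable (hP : MicroSupported P v) : ¬ Group.IsSolvable P := by
  rintro ⟨n, hn⟩
  refine hP.map_derivedSeries n v (.refl v) ?_
  rw [hn, Subgroup.map_bot, bot_inf_eq]

theorem not_virtuallySolvable (hP : MicroSupported P v) : ¬ VirtuallySolvable P := by
  rintro ⟨S, hS, (hsol : Group.IsSolvable S)⟩
  have hindex : (S.map P.subtype).IsFiniteRelIndex P := by
    rw [isFiniteRelIndex_iff_finiteIndex, subgroupOf,
      comap_map_eq_self_of_injective P.subtype_injective]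
    exact hS
  have hmap : Group.IsSolvable (S.map P.subtype) :=
    Group.isSolvable_of_surjective
      (f := (S.equivMapOfInjective P.subtype P.subtype_injective).toMonoidHom)
      (S.equivMapOfInjective P.subtype P.subtype_injective).surjective
  exact hP.of_isFiniteRelIndex.not_isSolvable hmap

end MicroSupported

theorem two_pow_le_card_layer (hm : ∀ n, 2 ≤ m n) (n : ℕ) : 2 ^ n ≤ Nat.card (layer m n) := by
  have hcard : Nat.card (layer m n) = ∏ i : Fin n, m i := by
    have e : layer m n ≃ ∀ i : Fin n, Fin (m i) := Equiv.sigmaSubtype n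
    simp [Nat.card_congr e]
  simpa [hcard] using Finset.univ.pow_card_le_prod (fun i : Fin n => m i) 2 fun i _ => hm i

namespace IsBranchGroup

theorem faithfulSMul (hG : IsBranchGroup m G) : FaithfulSMul G (Vertex m) where
  eq_of_smul_eq_smul {g h} hgh :=
    inv_mul_eq_one.1 (hG.faithful (g⁻¹ * h) fun v => by rw [mul_smul, ← hgh, inv_smul_smul])

theorem isTreeAction (hG : IsBranchGroup m G) : IsTreeAction m G where
  isChild_smul g _ _ := (hG.aut g _ _).1

theorem infinite (hm : ∀ n, 2 ≤ m n) (hG : IsBranchGroup m G) : Infinite G := by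
  by_contra hfin
  rw [not_infinite_iff_finite] at hfin
  have := hG.isTreeAction
  let v : Vertex m := ⟨Nat.card G, fun i => ⟨0, two_pos.trans_le (hm i)⟩⟩
  let orbitMap : G → layer m (Nat.card G) := fun g => ⟨g • v, level_smul g v⟩
  have hsurj : orbitMap.Surjective := fun w =>
    (hG.trans v w w.2.symm).imp fun _ hg => Subtype.ext hg
  have hle : Nat.card (layer m (Nat.card G)) ≤ Nat.card G :=
    Nat.card_le_card_of_surjective orbitMap hsurj
  exact (Nat.lt_two_pow_self.trans_le ((two_pow_le_card_layer hm _).trans hle)).false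

theorem rist_ne_bot (hm : ∀ n, 2 ≤ m n) (hG : IsBranchGroup m G) (v : Vertex m) :
    rist G v ≠ ⊥ := by
  intro hv
  have := hG.isTreeAction
  have hlayer : ristLayer m G v.level = ⊥ := by
    refine eq_bot_iff.2 (iSup₂_le fun w hw g hg => ?_)
    obtain ⟨k, rfl⟩ := hG.trans w v hw
    simpa [hv] using conj_mem_rist_smul hg k
  have hinf := hG.infinite hm
  apply (hG.ristFiniteIndex v.level).index_ne_zero
  rw [hlayer, index_bot, Nat.card_eq_zero_of_infinite]

end IsBranchGroup

end TreeAction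

theorem no_virtually_solvable_normal_subgroup_general {m : ℕ → ℕ} {G : Type*} [Group G]
    [MulAction G (Vertex m)] [FaithfulSMul G (Vertex m)] [IsTreeAction m G]
    (hrist : ∀ v : Vertex m, rist G v ≠ ⊥) (K : Subgroup G)
    [(normalizer (K : Set G)).FiniteIndex] (hsol : VirtuallySolvable K) : K = ⊥ := by
  by_contra hK
  obtain ⟨k, hk, hk1⟩ := K.bot_or_exists_ne_one.resolve_left hK
  obtain ⟨v, hkv⟩ := exists_smul_ne_of_ne_one (X := Vertex m) hk1
  have hG : MicroSupported (⊤ : Subgroup G) v := fun u _ => by rw [top_inf_eq]; exact hrist u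
  have hN : MicroSupported (normalizer (K : Set G)) v :=
    have := isFiniteRelIndex_of_finiteIndex (H := normalizer (K : Set G)) (K := ⊤)
    hG.of_isFiniteRelIndex
  have hKv : MicroSupported K v :=
    hN.of_commutator_inf_rist_le (commutator_inf_rist_le le_rfl hk hkv)
  exact hKv.not_virtuallySolvable hsol

/-- **Lemma.** If `G` is a branch group on `T` and `H ≤ G` has finite index, then `H`
has no non-trivial virtually soluble normal subgroup. -/
theorem no_virtually_solvable_normal_subgroup
    (m : ℕ → ℕ) (hm : ∀ n, 2 ≤ m n)
    (G : Type*) [Group G] [MulAction G (Vertex m)] (hG : IsBranchGroup m G)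
    (H : Subgroup G) [H.FiniteIndex]
    (K : Subgroup G) (hKH : K ≤ H) (hKn : ∀ h ∈ H, ∀ k ∈ K, h * k * h⁻¹ ∈ K)
    (hsol : VirtuallySolvable ↥K) :
    K = ⊥ := by
  have := hG.faithfulSMul
  have := hG.isTreeAction
  have : (normalizer (K : Set G)).FiniteIndex := finiteIndex_of_le (le_normalizer_iff.2 hKn)
  exact no_virtually_solvable_normal_subgroup_general (hG.rist_ne_bot hm) K hsol
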